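/- arXiv:math/0401177 — 2 statements merged into one kernel-verified Lean document; each statement's English description precedes it below -/
import Mathlib

section
/- Let n ≥ 1, let P be a column-stochastic n×n real matrix, let 0 < α < 1, and let v ∈ ℝⁿ have non-negative entries with eᵀv = 1. Set A = αP + (1−α)v eᵀ. Then for every real number t, (t − α) · det(t·I − A) = αⁿ · (t − 1) · det((t/α)·I − P). (Equivalently, as polynomials, (X − α)·charpoly(A) = αⁿ·(X − 1)·charpoly(P)∘(X/α); this encodes that the eigenvalues of A are 1, αλ₂, …, αλₙ when those of P are 1, λ₂, …, λₙ.) -/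
/-!
If `u` is a left eigenvector of `M` with eigenvalue `c`, then the row operation
`(uᵀ, 1) ↦ c • (uᵀ, 1) - uᵀ • (M, -v)` makes the bordered matrix `[M, -v; uᵀ, 1]` block triangular
with diagonal blocks `M` and `c + u ⬝ᵥ v`, while its determinant equals `det (M + v uᵀ)`. This
compares the two determinants with no division by `c`. A column-stochastic matrix has the all-ones
vector as a left eigenvector, so the comparison applies to `M = t I - α P`.
-/

open Matrix

section CommRing

variable {R ι : Type*} [CommRing R] [Fintype ι] [DecidableEq ι]

theorem mul_det_add_vecMulVec_of_vecMul_eq_smul {M : Matrix ι ι R} {u : ι → R} {c : R}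
    (hu : u ᵥ* M = c • u) (v : ι → R) :
    c * (M + vecMulVec v u).det = (c + u ⬝ᵥ v) * M.det := by
  let row : Matrix Unit ι R := replicateRow Unit u
  let col : Matrix ι Unit R := replicateCol Unit v
  have triangularize :
      fromBlocks 1 0 (-row) (c • 1) * fromBlocks M (-col) row 1 =
        fromBlocks M (-col) 0 ((c + u ⬝ᵥ v) • 1) := by
    have left_eigen : row * M = c • row := by
      rw [← replicateRow_vecMul, hu, replicateRow_smul]
    have pairing : row * col = (u ⬝ᵥ v) • 1 := by
      ext
      simp [row, col]
    simp [fromBlocks_multiply, left_eigen, pairing, add_smul, add_comm]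
  have bordered : (fromBlocks M (-col) row 1).det = (M + vecMulVec v u).det := by
    rw [det_fromBlocks_one₂₂, Matrix.neg_mul, sub_neg_eq_add, ← vecMulVec_eq]
  simpa [det_mul, bordered, mul_comm] using congrArg det triangularize

theorem sub_mul_det_smul_one_sub_add_vecMulVec {P : Matrix ι ι R} {u : ι → R} {μ : R}
    (hu : u ᵥ* P = μ • u) (v : ι → R) (t : R) :
    (t - μ) * (t • (1 : Matrix ι ι R) - (P + vecMulVec v u)).det =
      (t - (μ + u ⬝ᵥ v)) * (t • (1 : Matrix ι ι R) - P).det := by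
  have hu' : u ᵥ* (t • (1 : Matrix ι ι R) - P) = (t - μ) • u := by
    rw [vecMul_sub, vecMul_smul, vecMul_one, hu, sub_smul]
  simpa only [neg_vecMulVec, dotProduct_neg, ← sub_eq_add_neg, sub_sub] using
    mul_det_add_vecMulVec_of_vecMul_eq_smul hu' (-v)

end CommRing

section Field

variable {K ι : Type*} [Field K] [Fintype ι] [DecidableEq ι]

theorem det_smul_one_sub_smul (P : Matrix ι ι K) {α : K} (hα : α ≠ 0) (t : K) :
    (t • (1 : Matrix ι ι K) - α • P).det =
      α ^ Fintype.card ι * ((t / α) • (1 : Matrix ι ι K) - P).det := by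
  rw [← det_smul, smul_sub, smul_smul, mul_div_cancel₀ t hα]

theorem google_det_identity_general {P : Matrix ι ι K} {u v : ι → K}
    (hP : u ᵥ* P = u) (huv : u ⬝ᵥ v = 1) {α : K} (hα : α ≠ 0) (t : K) :
    (t - α) * (t • (1 : Matrix ι ι K) - (α • P + (1 - α) • vecMulVec v u)).det =
      α ^ Fintype.card ι * (t - 1) * ((t / α) • (1 : Matrix ι ι K) - P).det := by
  have hu : u ᵥ* (α • P) = α • u := by rw [vecMul_smul, hP]
  have hv : α + u ⬝ᵥ ((1 - α) • v) = 1 := by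
    rw [dotProduct_smul, huv, smul_eq_mul, mul_one, add_sub_cancel]
  rw [← smul_vecMulVec, sub_mul_det_smul_one_sub_add_vecMulVec hu, hv,
    det_smul_one_sub_smul P hα, mul_left_comm, mul_assoc]

end Field

/-- For the Google matrix `A = α•P + (1-α)•v eᵀ` built from a
column-stochastic matrix `P`, for every real `t`,
`(t - α) * det(t•I - A) = α^n * (t - 1) * det((t/α)•I - P)`. -/
theorem google_det_identity (n : ℕ) (hn : 1 ≤ n)
    (P : Matrix (Fin n) (Fin n) ℝ)
    (hPnonneg : ∀ i j, 0 ≤ P i j) (hPcol : ∀ j, ∑ i, P i j = 1)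
    (α : ℝ) (hα0 : 0 < α) (hα1 : α < 1)
    (v : Fin n → ℝ) (hvnonneg : ∀ i, 0 ≤ v i) (hvsum : ∑ i, v i = 1)
    (A : Matrix (Fin n) (Fin n) ℝ)
    (hA : A = α • P + (1 - α) • Matrix.vecMulVec v (fun _ => (1 : ℝ))) :
    ∀ t : ℝ,
      (t - α) * (t • (1 : Matrix (Fin n) (Fin n) ℝ) - A).det
        = α ^ n * (t - 1) * ((t / α) • (1 : Matrix (Fin n) (Fin n) ℝ) - P).det := by
  have ones_vecMul : (fun _ => 1) ᵥ* P = fun _ => 1 := by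
    ext j
    simp only [vecMul, dotProduct, one_mul, hPcol]
  have ones_dotProduct : (fun _ => 1) ⬝ᵥ v = 1 := by
    simp only [dotProduct, one_mul, hvsum]
  simpa only [hA, Fintype.card_fin] using
    google_det_identity_general ones_vecMul ones_dotProduct hα0.ne'
end

section
/- Let n ≥ 1, let P be a column-stochastic n×n real matrix, let 0 < α < 1, and let v ∈ ℝⁿ have non-negative entries with eᵀv = 1. Set A = αP + (1−α)v eᵀ. Regard P and A as complex matrices and let roots(P) and roots(A) denote the multisets of complex roots (with multiplicity) of their characteristic polynomials. Then 1 ∈ roots(P), and roots(A) = {1} + α · (roots(P) with one copy of 1 removed), where α · S denotes the multiset obtained by multiplying every element of S by α. -/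
/-!
The rank-one term `v eᵀ` of the Google matrix is built from a left eigenvector `e` of `P`, so the
theorem is a case of Brauer's: if `wᵀ M = μ wᵀ`, then the spectrum of `M + u wᵀ` is that of `M` with
one copy of `μ` replaced by `μ + w ⬝ᵥ u`. Brauer's theorem follows by evaluating in two ways the
determinant of `B = X - M` bordered by `u`, `wᵀ` and a corner entry `1`. With `c = X - μ`,
```
⎡  1   0 ⎤ ⎡ B   u ⎤   ⎡ B      u     ⎤
⎣ -wᵀ  c ⎦ ⎣ wᵀ  1 ⎦ = ⎣ 0  c - w ⬝ᵥ u ⎦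
```
while the Schur complement of the corner entry is `B - u wᵀ`. For the Google matrix, `M = α P`,
`μ = α` and `u = (1 - α) v`, so the eigenvalue `α` of `α P` becomes `α + (1 - α) = 1`.
-/

open Matrix Polynomial

variable {ι R : Type*} [CommRing R]

section BrauerTheorem

variable [Fintype ι] [DecidableEq ι]

theorem mul_det_sub_vecMulVec_of_vecMul_eq_smul {B : Matrix ι ι R} {w : ι → R} {c : R}
    (hw : w ᵥ* B = c • w) (u : ι → R) :
    c * (B - vecMulVec u w).det = (c - w ⬝ᵥ u) * B.det := by
  let E : Matrix (ι ⊕ Unit) (ι ⊕ Unit) R := fromBlocks 1 0 (-replicateRow Unit w) (c • 1)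
  let N : Matrix (ι ⊕ Unit) (ι ⊕ Unit) R :=
    fromBlocks B (replicateCol Unit u) (replicateRow Unit w) 1
  have hE : E.det = c := by simp [E]
  have hN : N.det = (B - vecMulVec u w).det := by
    rw [det_fromBlocks_one₂₂, ← vecMulVec_eq]
  have hEN : E * N = fromBlocks B (replicateCol Unit u) 0 ((c - w ⬝ᵥ u) • 1) := by
    have hrow :
        -replicateRow Unit w * B + c • (1 : Matrix Unit Unit R) * replicateRow Unit w = 0 := by
      rw [Matrix.neg_mul, ← replicateRow_vecMul, hw, replicateRow_smul, smul_mul, Matrix.one_mul,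
        neg_add_cancel]
    have hcorner : -replicateRow Unit w * replicateCol Unit u + c • (1 : Matrix Unit Unit R) * 1 =
        (c - w ⬝ᵥ u) • 1 := by
      ext i j
      simp [sub_eq_neg_add]
    rw [fromBlocks_multiply, hrow, hcorner]
    simp only [Matrix.one_mul, Matrix.zero_mul, add_zero]
  calc c * (B - vecMulVec u w).det = (E * N).det := by rw [det_mul, hE, hN]
    _ = (c - w ⬝ᵥ u) * B.det := by rw [hEN, det_fromBlocks_zero₂₁]; simp [mul_comm]

theorem charmatrix_add_vecMulVec (M : Matrix ι ι R) (u w : ι → R) :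
    charmatrix (M + vecMulVec u w) = charmatrix M - vecMulVec (C ∘ u) (C ∘ w) := by
  ext1 i j
  simp [charmatrix_apply, vecMulVec_apply, sub_sub]

theorem vecMul_charmatrix_of_vecMul_eq_smul {M : Matrix ι ι R} {w : ι → R} {μ : R}
    (hw : w ᵥ* M = μ • w) : (C ∘ w) ᵥ* charmatrix M = (X - C μ) • (C ∘ w) := by
  have hC : (C ∘ w) ᵥ* M.map C = C μ • (C ∘ w) := by
    ext1 j
    rw [← RingHom.map_vecMul, hw]
    simp
  rw [charmatrix, RingHom.mapMatrix_apply, vecMul_sub, hC, sub_smul]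
  congr 1
  ext1 j
  rw [scalar_apply, vecMul_diagonal, Pi.smul_apply, smul_eq_mul, mul_comm]

theorem charpoly_add_vecMulVec_of_vecMul_eq_smul {M : Matrix ι ι R} {w : ι → R} {μ : R}
    (hw : w ᵥ* M = μ • w) (u : ι → R) :
    (X - C μ) * (M + vecMulVec u w).charpoly = (X - C (μ + w ⬝ᵥ u)) * M.charpoly := by
  have hdot : (C ∘ w) ⬝ᵥ (C ∘ u) = C (w ⬝ᵥ u) := (RingHom.map_dotProduct C w u).symm
  rw [charpoly, charmatrix_add_vecMulVec,
    mul_det_sub_vecMulVec_of_vecMul_eq_smul (vecMul_charmatrix_of_vecMul_eq_smul hw), hdot,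
    sub_sub, ← C_add, charpoly]

variable [IsDomain R]

theorem mem_roots_charpoly_of_vecMul_eq_smul {M : Matrix ι ι R} {w : ι → R} {μ : R}
    (hw₀ : w ≠ 0) (hw : w ᵥ* M = μ • w) : μ ∈ M.charpoly.roots := by
  rw [mem_roots M.charpoly_monic.ne_zero, IsRoot, eval_charpoly, ← exists_vecMul_eq_zero_iff]
  refine ⟨w, hw₀, ?_⟩
  rw [vecMul_sub, hw, scalar_apply, ← smul_one_eq_diagonal, vecMul_smul, vecMul_one, sub_self]

theorem roots_charpoly_add_vecMulVec_of_vecMul_eq_smul [DecidableEq R] {M : Matrix ι ι R}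
    {w : ι → R} {μ : R} (hw₀ : w ≠ 0) (hw : w ᵥ* M = μ • w) (u : ι → R) :
    (M + vecMulVec u w).charpoly.roots = (μ + w ⬝ᵥ u) ::ₘ M.charpoly.roots.erase μ := by
  have hroots := congrArg roots (charpoly_add_vecMulVec_of_vecMul_eq_smul hw u)
  rw [roots_mul ((monic_X_sub_C _).mul (charpoly_monic _)).ne_zero,
    roots_mul ((monic_X_sub_C _).mul (charpoly_monic _)).ne_zero, roots_X_sub_C, roots_X_sub_C,
    Multiset.singleton_add, Multiset.singleton_add] at hroots
  rw [← Multiset.cons_inj_right μ, hroots, Multiset.cons_swap,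
    Multiset.cons_erase (mem_roots_charpoly_of_vecMul_eq_smul hw₀ hw)]

end BrauerTheorem

section Scaling

variable [Fintype ι] [DecidableEq ι]

theorem charpolyRev_smul (a : R) (M : Matrix ι ι R) :
    (a • M).charpolyRev = M.charpolyRev.comp (C a * X) := by
  rw [charpolyRev, charpolyRev, ← coe_compRingHom_apply, RingHom.map_det]
  congr 1
  ext1 i j
  have hentry (m : R) : X * (C a * C m) = C m * (C a * X) := by ring
  by_cases hij : i = j <;> simp [hij, hentry]

theorem coeff_charpoly_eq_coeff_charpolyRev (M : Matrix ι ι R) (i : ℕ) :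
    M.charpoly.coeff i = M.charpolyRev.coeff (revAt (Fintype.card ι) i) := by
  nontriviality R
  rw [← reverse_charpoly, coeff_reverse, charpoly_natDegree_eq_dim, revAt_invol]

theorem charpoly_smul (a : R) (M : Matrix ι ι R) :
    (a • M).charpoly = M.charpoly.scaleRoots a := by
  nontriviality R
  ext i
  rw [coeff_scaleRoots, charpoly_natDegree_eq_dim]
  rcases le_or_gt i (Fintype.card ι) with hi | hi
  · rw [coeff_charpoly_eq_coeff_charpolyRev, charpolyRev_smul, comp_C_mul_X_coeff,
      ← coeff_charpoly_eq_coeff_charpolyRev, revAt_le hi]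
  · have coeff_eq_zero (N : Matrix ι ι R) : N.charpoly.coeff i = 0 :=
      coeff_eq_zero_of_natDegree_lt (by rwa [charpoly_natDegree_eq_dim])
    rw [coeff_eq_zero, coeff_eq_zero, zero_mul]

theorem roots_charpoly_smul [IsDomain R] {a : R} (ha : IsUnit a) (M : Matrix ι ι R) :
    (a • M).charpoly.roots = M.charpoly.roots.map (a * ·) := by
  rw [charpoly_smul, roots_scaleRoots _ ha]

theorem roots_charpoly_smul_add_vecMulVec_of_vecMul_eq_smul [IsDomain R] [DecidableEq R]
    {M : Matrix ι ι R} {w : ι → R} {μ a : R} (ha : IsUnit a) (hw₀ : w ≠ 0)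
    (hw : w ᵥ* M = μ • w) (u : ι → R) :
    (a • M + vecMulVec u w).charpoly.roots =
      (a * μ + w ⬝ᵥ u) ::ₘ (M.charpoly.roots.erase μ).map (a * ·) := by
  have haw : w ᵥ* (a • M) = (a * μ) • w := by rw [vecMul_smul, hw, smul_smul]
  rw [roots_charpoly_add_vecMulVec_of_vecMul_eq_smul hw₀ haw, roots_charpoly_smul ha,
    ← Multiset.map_erase _ ha.mul_right_injective]

end Scaling

section GoogleMatrix

/-- The Google matrix `α P + (1 - α) v eᵀ` with link matrix `P`, damping factor `α` and
teleportation vector `v`. Stochasticity of `P` and `v` is not part of the definition. -/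
def googleMatrix (α : R) (P : Matrix ι ι R) (v : ι → R) : Matrix ι ι R :=
  α • P + (1 - α) • vecMulVec v 1

theorem googleMatrix_map {S : Type*} [CommRing S] (f : R →+* S) (α : R) (P : Matrix ι ι R)
    (v : ι → R) : (googleMatrix α P v).map f = googleMatrix (f α) (P.map f) (f ∘ v) := by
  ext i j
  simp [googleMatrix]

theorem google_charpoly_roots_general [Fintype ι] [DecidableEq ι] [IsDomain R] [DecidableEq R]
    {P : Matrix ι ι R} (hP : ∀ j, ∑ i, P i j = 1) {α : R} (hα : IsUnit α)
    {v : ι → R} (hv : ∑ i, v i = 1) :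
    1 ∈ P.charpoly.roots ∧
      (googleMatrix α P v).charpoly.roots = 1 ::ₘ (P.charpoly.roots.erase 1).map (α * ·) := by
  have : Nonempty ι := by
    by_contra! h
    simp at hv
  have one_vecMul : 1 ᵥ* P = (1 : R) • 1 := by
    ext j
    rw [vecMul, one_dotProduct, hP, one_smul, Pi.one_apply]
  have eigenvalue : α * 1 + 1 ⬝ᵥ (1 - α) • v = 1 := by
    rw [dotProduct_smul, one_dotProduct, hv, smul_eq_mul]
    ring
  refine ⟨mem_roots_charpoly_of_vecMul_eq_smul one_ne_zero one_vecMul, ?_⟩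
  rw [googleMatrix, ← smul_vecMulVec,
    roots_charpoly_smul_add_vecMulVec_of_vecMul_eq_smul hα one_ne_zero one_vecMul, eigenvalue]

end GoogleMatrix

/-- For the Google matrix `A = α•P + (1-α)•v eᵀ`, regarding `P` and `A`
as complex matrices, `1` is a root of the characteristic polynomial of `P`, and the
multiset of roots of `charpoly A` equals `{1}` together with `α` times the multiset of
roots of `charpoly P` with one copy of `1` removed. -/
theorem google_charpoly_roots (n : ℕ) (hn : 1 ≤ n)
    (P : Matrix (Fin n) (Fin n) ℝ)
    (hPnonneg : ∀ i j, 0 ≤ P i j) (hPcol : ∀ j, ∑ i, P i j = 1)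
    (α : ℝ) (hα0 : 0 < α) (hα1 : α < 1)
    (v : Fin n → ℝ) (hvnonneg : ∀ i, 0 ≤ v i) (hvsum : ∑ i, v i = 1)
    (A : Matrix (Fin n) (Fin n) ℝ)
    (hA : A = α • P + (1 - α) • Matrix.vecMulVec v (fun _ => (1 : ℝ))) :
    (1 : ℂ) ∈ ((P.map (fun x : ℝ => (x : ℂ))).charpoly).roots ∧
    ((A.map (fun x : ℝ => (x : ℂ))).charpoly).roots
      = (1 : ℂ) ::ₘ
        (Multiset.map (fun z : ℂ => (α : ℂ) * z)
          ((((P.map (fun x : ℝ => (x : ℂ))).charpoly).roots).erase 1)) := by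
  have hmap : A.map (fun x : ℝ => (x : ℂ)) =
      googleMatrix (α : ℂ) (P.map fun x : ℝ => (x : ℂ)) (fun i => (v i : ℂ)) :=
    hA ▸ googleMatrix_map Complex.ofRealHom α P v
  rw [hmap]
  exact google_charpoly_roots_general (fun j => by simpa using mod_cast hPcol j)
    (IsUnit.mk0 _ (mod_cast hα0.ne')) (mod_cast hvsum)
end
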